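/- Let l, m, n be nonzero integers and let H be the presented group ⟨x, y, t ∣ t⁻¹ x t = x^l, x^m = y^n⟩. Then the subgroup of H generated by (the images of) y and t is isomorphic to the Baumslag–Solitar group BS(n, n·l) = ⟨y, t ∣ t⁻¹ y^n t = y^{n·l}⟩, via an isomorphism sending the generators of BS(n, n·l) to y and t respectively. -/

import Mathlib

/-!
Write `BS(1,l) = ⟨x, t ∣ t⁻¹ x t = x^l⟩`. Amalgamating it with an infinite cyclic group `⟨y⟩`
along `x = y^n` gives `BS(n, n l)`, and amalgamating it along `x^m = y^n` gives
`H = ⟨x, y, t ∣ t⁻¹ x t = x^l, x^m = y^n⟩`. The endomorphism `x ↦ x^m`, `t ↦ t` of `BS(1,l)` is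
injective and matches the two amalgamated subgroups, hence it induces an injection of amalgamated
products: a reduced word is sent to a reduced word (`pushoutMap_injective`).

To have the infinite order of `x` and the injectivity of `x ↦ x^m`, `t ↦ t` at once, the second
copy of `BS(1,l)` is replaced by the concrete group `Perm ℚ × ℤ`, in which `x` acts as `q ↦ q + 1`
and `t` as `q ↦ q / l`, the factor `ℤ` counting the exponent of `t`. Since every element of
`BS(1,l)` has the form `t^i x^j t^{-k}` with `i, k ≥ 0` (`BS.exists_normal_form`), the
homomorphism `x ↦ x^m`, `t ↦ t` from `BS(1,l)` to this group is injective. The group `H` maps to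
the resulting amalgamated product, so it suffices that the composite
`BS(n, n l) → H → (Perm ℚ × ℤ) *_ℤ ℤ` is injective, and this composite factors as
`BS(n, n l) → BS(1,l) *_ℤ ℤ → (Perm ℚ × ℤ) *_ℤ ℤ`.
-/

/-- The single relator of the Baumslag–Solitar group `BS(m,n)`:
`t⁻¹ x^m t x^{-n}`, where `x = FreeGroup.of true` and `t = FreeGroup.of false`. -/
def bsRels (m n : ℤ) : Set (FreeGroup Bool) :=
  {(FreeGroup.of false)⁻¹ * (FreeGroup.of true) ^ m * FreeGroup.of false *
    (FreeGroup.of true) ^ (-n)}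

/-- The Baumslag–Solitar group `BS(m,n) = ⟨x, t ∣ t⁻¹ x^m t = x^n⟩`. -/
def BS (m n : ℤ) : Type := PresentedGroup (bsRels m n)

instance (m n : ℤ) : Group (BS m n) := by unfold BS; infer_instance

/-- The image of the generator `x` in `BS(m,n)`. -/
def BS.x (m n : ℤ) : BS m n := PresentedGroup.of (rels := bsRels m n) true

/-- The image of the generator `t` in `BS(m,n)`. -/
def BS.t (m n : ℤ) : BS m n := PresentedGroup.of (rels := bsRels m n) false

/-- A group is residually finite if every nontrivial element is detected by a
homomorphism to a finite group. -/
def IsResiduallyFinite (G : Type*) [Group G] : Prop :=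
  ∀ g : G, g ≠ 1 → ∃ (H : Type) (_ : Group H) (_ : Finite H) (f : G →* H), f g ≠ 1

/-- The relators `t⁻¹ x t x^{-l}` and `x^m y^{-n}` in the free group on the three
generators `x = 0`, `y = 1`, `t = 2`. -/
def loopEdgeRels (l m n : ℤ) : Set (FreeGroup (Fin 3)) :=
  {(FreeGroup.of 2)⁻¹ * FreeGroup.of 0 * FreeGroup.of 2 * (FreeGroup.of 0) ^ (-l),
   (FreeGroup.of 0) ^ m * (FreeGroup.of 1) ^ (-n)}

/-! ### Injections of amalgamated products -/

open Monoid in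
/-- A morphism of amalgamation diagrams which is injective on every factor and is the identity on
the amalgamated group induces an injection: letters outside the amalgamated subgroup stay outside
it, so reduced words stay reduced. -/
theorem pushoutMap_injective {ι : Type*} {G G' : ι → Type*} {H : Type*} [∀ i, Group (G i)]
    [∀ i, Group (G' i)] [Group H] {φ : ∀ i, H →* G i} {ψ : ∀ i, H →* G' i}
    (f : ∀ i, G i →* G' i) (hφ : ∀ i, Function.Injective (φ i))
    (hψ : ∀ i, Function.Injective (ψ i)) (hf : ∀ i, Function.Injective (f i))
    (hcomm : ∀ i h, f i (φ i h) = ψ i h)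
    (F : PushoutI φ →* PushoutI ψ)
    (hF : ∀ i g, F (PushoutI.of i g) = PushoutI.of i (f i g))
    (hFb : ∀ h, F (PushoutI.base φ h) = PushoutI.base ψ h) :
    Function.Injective F := by
  classical
  rw [injective_iff_map_eq_one]
  intro g hg
  obtain ⟨d⟩ := PushoutI.NormalWord.transversal_nonempty φ hφ
  obtain ⟨w, rfl⟩ := (PushoutI.NormalWord.equiv (d := d)).symm.surjective g
  change F w.prod = 1 at hg
  change w.prod = 1
  let w' : CoprodI.Word G' :=
    { toList := w.toList.map fun s => ⟨s.1, f s.1 s.2⟩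
      ne_one := by
        intro s hs
        obtain ⟨r, hr, rfl⟩ := List.mem_map.1 hs
        exact fun h => w.ne_one r hr ((injective_iff_map_eq_one _).1 (hf _) _ h)
      chain_ne := by
        rw [List.isChain_map]
        exact w.chain_ne }
  have hred : PushoutI.Reduced ψ w' := by
    intro s hs
    obtain ⟨⟨i, r⟩, hr, rfl⟩ := List.mem_map.1 hs
    rintro ⟨h, hh⟩
    have hrh : φ i h = r := hf i ((hcomm i h).trans hh)
    -- `r = r * 1 = 1 * r` are two decompositions along the transversal, so `r = 1`.
    have := (d.compl i).1 (a₁ := (⟨r, ⟨h, hrh⟩⟩, ⟨1, d.one_mem i⟩))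
      (a₂ := (⟨1, one_mem _⟩, ⟨r, w.normalized i r hr⟩)) (by simp)
    exact w.ne_one _ hr (by simpa using congrArg (fun p => (p.1 : G i)) this)
  have hprod : F (PushoutI.ofCoprodI w.toWord.prod) = PushoutI.ofCoprodI w'.prod := by
    simp only [CoprodI.Word.prod, map_list_prod, List.map_map, w']
    congr 1
    refine List.map_congr_left fun s _ => ?_
    simp [hF]
  have hg' : PushoutI.base ψ w.head * PushoutI.ofCoprodI w'.prod = 1 := by
    rw [← hprod, ← hFb, ← map_mul]
    exact hg
  have hempty := hred.eq_empty_of_mem_range hψ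
    ⟨w.head⁻¹, by rw [map_inv]; exact inv_eq_of_mul_eq_one_right hg'⟩
  have hhead : w.head = 1 := by
    rw [hempty] at hg'
    exact PushoutI.base_injective hψ (by simpa using hg')
  have hlist : w.toList = [] := by
    simpa [w'] using congrArg CoprodI.Word.toList hempty
  simp [PushoutI.NormalWord.prod, hhead, CoprodI.Word.prod, hlist]

/-! ### Baumslag–Solitar groups and the normal form in `BS(1,l)` -/

/-- The universal property of `BS(m,n)`. -/
def BS.lift {G : Type*} [Group G] (m n : ℤ) (a b : G) (h : b⁻¹ * a ^ m * b = a ^ n) :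
    BS m n →* G :=
  PresentedGroup.toGroup (rels := bsRels m n) (f := fun c => cond c a b) (by
    rintro r rfl
    simp [h])

theorem BS.lift_x {G : Type*} [Group G] (m n : ℤ) (a b : G) (h : b⁻¹ * a ^ m * b = a ^ n) :
    BS.lift m n a b h (BS.x m n) = a :=
  PresentedGroup.toGroup.of (rels := bsRels m n) _

theorem BS.lift_t {G : Type*} [Group G] (m n : ℤ) (a b : G) (h : b⁻¹ * a ^ m * b = a ^ n) :
    BS.lift m n a b h (BS.t m n) = b :=
  PresentedGroup.toGroup.of (rels := bsRels m n) _

theorem BS.hom_ext {G : Type*} [Group G] {m n : ℤ} {f g : BS m n →* G}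
    (hx : f (BS.x m n) = g (BS.x m n)) (ht : f (BS.t m n) = g (BS.t m n)) : f = g :=
  PresentedGroup.ext (rels := bsRels m n) (fun c => by cases c <;> assumption)

theorem BS.rel (m n : ℤ) :
    (BS.t m n)⁻¹ * BS.x m n ^ m * BS.t m n = BS.x m n ^ n := by
  have h : PresentedGroup.mk (bsRels m n) ((FreeGroup.of false)⁻¹ * (FreeGroup.of true) ^ m *
      FreeGroup.of false * (FreeGroup.of true) ^ (-n)) = 1 :=
    PresentedGroup.one_of_mem rfl
  simp only [map_mul, map_inv, map_zpow, zpow_neg] at h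
  exact mul_inv_eq_one.1 h

/-- The relation `t⁻¹ x t = x^l` allows negative powers of `t` to be moved to the right and
positive ones to the left. -/
theorem BS.exists_normal_form (l : ℤ) (g : BS 1 l) :
    ∃ (i k : ℕ) (j : ℤ), g = BS.t 1 l ^ i * BS.x 1 l ^ j * (BS.t 1 l)⁻¹ ^ k := by
  set x := BS.x 1 l with hx
  set t := BS.t 1 l with ht
  have hrel : t⁻¹ * x * t = x ^ l := by simpa using BS.rel 1 l
  have h1 : ∀ e : ℤ, t⁻¹ * x ^ e = x ^ (l * e) * t⁻¹ := by
    intro e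
    have : SemiconjBy t⁻¹ x (x ^ l) := by
      rw [SemiconjBy, ← hrel]; group
    simpa [SemiconjBy, zpow_mul] using this.zpow_right e
  have h2 : ∀ (k : ℕ) (e : ℤ), t⁻¹ ^ k * x ^ e = x ^ (l ^ k * e) * t⁻¹ ^ k := by
    intro k
    induction k with
    | zero => simp
    | succ k ih =>
      intro e
      rw [pow_succ, mul_assoc, h1, ← mul_assoc, ih, mul_assoc]
      congr 2
      ring
  have hX : ∀ (e : ℤ) (i k : ℕ) (j : ℤ), ∃ (i' k' : ℕ) (j' : ℤ),
      t ^ i * x ^ j * t⁻¹ ^ k * x ^ e = t ^ i' * x ^ j' * t⁻¹ ^ k' := fun e i k j =>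
    ⟨i, k, j + l ^ k * e, by rw [mul_assoc, h2, zpow_add]; group⟩
  have hT : ∀ (i k : ℕ) (j : ℤ), ∃ (i' k' : ℕ) (j' : ℤ),
      t ^ i * x ^ j * t⁻¹ ^ k * t = t ^ i' * x ^ j' * t⁻¹ ^ k' := by
    intro i k j
    cases k with
    | zero =>
      refine ⟨i + 1, 0, l * j, ?_⟩
      have : x ^ j * t = t * x ^ (l * j) := by
        rw [← inv_mul_eq_iff_eq_mul, ← mul_assoc, h1]; group
      simp [mul_assoc, this, pow_succ]
    | succ k => exact ⟨i, k, j, by simp [pow_succ, mul_assoc]⟩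
  have hT' : ∀ (i k : ℕ) (j : ℤ), ∃ (i' k' : ℕ) (j' : ℤ),
      t ^ i * x ^ j * t⁻¹ ^ k * t⁻¹ = t ^ i' * x ^ j' * t⁻¹ ^ k' := fun i k j =>
    ⟨i, k + 1, j, by rw [pow_succ]; group⟩
  have key : ∀ z : FreeGroup Bool, ∀ (i k : ℕ) (j : ℤ), ∃ (i' k' : ℕ) (j' : ℤ),
      t ^ i * x ^ j * t⁻¹ ^ k * (show BS 1 l from PresentedGroup.mk (bsRels 1 l) z) =
        t ^ i' * x ^ j' * t⁻¹ ^ k' := by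
    intro z
    induction z using FreeGroup.induction_on with
    | C1 => exact fun i k j => ⟨i, k, j, mul_one _⟩
    | of c =>
      cases c
      · exact hT
      · have h := hX 1
        rwa [zpow_one] at h
    | inv_of c _ =>
      cases c
      · exact hT'
      · have h := hX (-1)
        rwa [zpow_neg_one] at h
    | mul y z hy hz =>
      intro i k j
      obtain ⟨i', k', j', h⟩ := hy i k j
      obtain ⟨i'', k'', j'', h'⟩ := hz i' k' j'
      refine ⟨i'', k'', j'', ?_⟩
      rw [← h', ← h]
      exact (mul_assoc _ (show BS 1 l from PresentedGroup.mk (bsRels 1 l) y)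
        (show BS 1 l from PresentedGroup.mk (bsRels 1 l) z)).symm
  obtain ⟨z, rfl⟩ := PresentedGroup.mk_surjective (bsRels 1 l) g
  obtain ⟨i, k, j, h⟩ := key z 0 0 0
  rw [pow_zero, pow_zero, zpow_zero, one_mul, one_mul, one_mul] at h
  exact ⟨i, k, j, h⟩

/-! ### The embedding of `BS(1,l)` into `Perm ℚ × ℤ` -/

/-- The concrete group containing `BS(1,l)`. The factor `ℤ` records the exponent of `t`; it is
needed because `q ↦ q / l` has finite order when `l = ±1`. -/
abbrev Aff : Type := Equiv.Perm ℚ × Multiplicative ℤ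

/-- The translation `q ↦ q + 1`, the image of `x`. -/
def Aff.x : Aff := (Equiv.addRight (1 : ℚ), 1)

/-- The dilation `q ↦ q / l`, the image of `t`. -/
def Aff.t (l : ℤ) (hl : l ≠ 0) : Aff :=
  (Equiv.divRight₀ (l : ℚ) (by exact_mod_cast hl), Multiplicative.ofAdd 1)

theorem Aff.x_zpow (j : ℤ) : Aff.x ^ j = (Equiv.addRight (j : ℚ), 1) := by
  have : (Equiv.addRight (1 : ℚ)) ^ j = Equiv.addRight (j : ℚ) := by
    let T : Multiplicative ℚ →* Equiv.Perm ℚ :=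
      { toFun := fun a => Equiv.addRight a.toAdd
        map_one' := Equiv.ext fun q => by simp
        map_mul' := fun a b => Equiv.ext fun q => by simp [add_assoc, add_comm b.toAdd] }
    have h := map_zpow T (Multiplicative.ofAdd 1) j
    rw [← ofAdd_zsmul, zsmul_one] at h
    exact h.symm
  simp [Aff.x, Prod.pow_mk, this]

theorem Aff.x_zpow_injective : Function.Injective fun j : ℤ => Aff.x ^ j := by
  intro a b h
  simp only [Aff.x_zpow] at h
  simpa using congrArg (fun p : Aff => p.1 0) h

theorem Aff.rel (l : ℤ) (hl : l ≠ 0) (m : ℤ) :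
    (Aff.t l hl)⁻¹ * Aff.x ^ m * Aff.t l hl = Aff.x ^ (m * l) := by
  have hl' : (l : ℚ) ≠ 0 := by exact_mod_cast hl
  rw [mul_assoc, inv_mul_eq_iff_eq_mul, Aff.x_zpow, Aff.x_zpow]
  refine Prod.ext (Equiv.ext fun q => ?_) (by simp)
  simp [Aff.t]
  field_simp

/-- The embedding `x ↦ x^m`, `t ↦ t` of `BS(1,l)` into `Perm ℚ × ℤ`. -/
def BS.toAff (l m : ℤ) (hl : l ≠ 0) : BS 1 l →* Aff :=
  BS.lift 1 l (Aff.x ^ m) (Aff.t l hl) (by rw [zpow_one, Aff.rel, zpow_mul])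

theorem BS.toAff_injective (l m : ℤ) (hl : l ≠ 0) (hm : m ≠ 0) :
    Function.Injective (BS.toAff l m hl) := by
  rw [injective_iff_map_eq_one]
  intro g hg
  obtain ⟨i, k, j, rfl⟩ := BS.exists_normal_form l g
  simp only [BS.toAff, map_mul, map_pow, map_zpow, map_inv, BS.lift_x, BS.lift_t] at hg
  have hik : i = k := by
    have h := congrArg (fun p : Aff => Multiplicative.toAdd p.2) hg
    rw [← zpow_mul, Aff.x_zpow] at h
    simp [Aff.t] at h
    omega
  subst hik
  rw [inv_pow, conj_eq_one_iff, ← zpow_mul] at hg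
  have hj : m * j = 0 := Aff.x_zpow_injective (by simpa using hg)
  have hj : j = 0 := (mul_eq_zero.1 hj).resolve_left hm
  simp [hj]

/-! ### Amalgamated products with an infinite cyclic group -/

/-- The two factors of an amalgamated product `A *_ℤ ℤ`. -/
def Factor (A : Type) (b : Bool) : Type := bif b then A else Multiplicative ℤ

instance (A : Type) [Group A] : ∀ b, Group (Factor A b)
  | true => inferInstanceAs (Group A)
  | false => inferInstanceAs (Group (Multiplicative ℤ))

/-- The amalgamation diagram identifying `a : A` with the `n`-th power of the generator of the
infinite cyclic factor. -/
def diagram {A : Type} [Group A] (a : A) (n : ℤ) : ∀ b, Multiplicative ℤ →* Factor A b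
  | true => zpowersHom A a
  | false => zpowersHom (Multiplicative ℤ) (Multiplicative.ofAdd n)

/-- The amalgamated product `A *_{a = y^n} ⟨y⟩`. -/
abbrev Amalgam {A : Type} [Group A] (a : A) (n : ℤ) : Type := Monoid.PushoutI (diagram a n)

namespace Amalgam

variable {A : Type} [Group A] (a : A) (n : ℤ)

/-- The inclusion of the factor `A`. -/
def inl : A →* Amalgam a n := Monoid.PushoutI.of (φ := diagram a n) true

/-- The generator `y` of the infinite cyclic factor. -/
def y : Amalgam a n :=
  Monoid.PushoutI.of (φ := diagram a n) false (Multiplicative.ofAdd (1 : ℤ))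

theorem of_false (k : Multiplicative ℤ) :
    Monoid.PushoutI.of (φ := diagram a n) false k = y a n ^ k.toAdd := by
  refine Eq.trans (congrArg _ ?_)
    (map_zpow (Monoid.PushoutI.of (φ := diagram a n) false) _ _)
  change k = (Multiplicative.ofAdd (1 : ℤ)) ^ k.toAdd
  rw [← ofAdd_zsmul]
  simp

theorem y_zpow : y a n ^ n = inl a n a := by
  have h1 := Monoid.PushoutI.of_apply_eq_base (diagram a n) true (Multiplicative.ofAdd 1)
  have h2 := Monoid.PushoutI.of_apply_eq_base (diagram a n) false (Multiplicative.ofAdd 1)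
  have e1 : diagram a n true (Multiplicative.ofAdd 1) = a := by
    change zpowersHom A a _ = a
    simp
  have e2 : diagram a n false (Multiplicative.ofAdd 1) = Multiplicative.ofAdd n := by
    change zpowersHom (Multiplicative ℤ) _ _ = _
    simp
  rw [e1] at h1
  rw [e2, of_false, ← h1] at h2
  exact h2

variable {a n}

theorem diagram_injective (ha : Function.Injective fun j : ℤ => a ^ j) (hn : n ≠ 0) (b : Bool) :
    Function.Injective (diagram a n b) := by
  cases b
  · intro p q h
    change zpowersHom (Multiplicative ℤ) _ p = zpowersHom (Multiplicative ℤ) _ q at h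
    rw [zpowersHom_apply, zpowersHom_apply, ← ofAdd_zsmul, ← ofAdd_zsmul] at h
    have := Multiplicative.ofAdd.injective h
    simpa [hn] using this
  · intro p q h
    change zpowersHom A a p = zpowersHom A a q at h
    exact ha h

/-- The homomorphism from `A *_{a = y^n} ⟨y⟩` given by `f` on `A` and by `y ↦ c`. -/
def lift {K : Type*} [Group K] (f : A →* K) (c : K) (h : c ^ n = f a) : Amalgam a n →* K :=
  Monoid.PushoutI.lift
    (fun b => match b with
      | true => f
      | false => zpowersHom K c)
    (zpowersHom K (f a)) (by
      rintro (_ | _)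
      · ext
        change zpowersHom K c (zpowersHom (Multiplicative ℤ) (Multiplicative.ofAdd n) _) = _
        simp [h]
      · ext
        change f (zpowersHom A a _) = _
        simp)

theorem lift_inl {K : Type*} [Group K] (f : A →* K) (c : K) (h : c ^ n = f a) (g : A) :
    lift f c h (inl a n g) = f g :=
  Monoid.PushoutI.lift_of (φ := diagram a n) _ _ _ (i := true) g

theorem lift_y {K : Type*} [Group K] (f : A →* K) (c : K) (h : c ^ n = f a) :
    lift f c h (y a n) = c := by
  refine (Monoid.PushoutI.lift_of (φ := diagram a n) _ _ _ (i := false) _).trans ?_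
  change zpowersHom K c (Multiplicative.ofAdd 1) = c
  exact (zpowersHom_apply _ _ _).trans (zpow_one c)

/-- The case of `pushoutMap_injective` in which the infinite cyclic factor is left unchanged. -/
theorem lift_injective {A' : Type} [Group A'] (f : A →* A') (hf : Function.Injective f)
    (ha : Function.Injective fun j : ℤ => f a ^ j) (hn : n ≠ 0)
    (h : y (f a) n ^ n = (inl (f a) n).comp f a) :
    Function.Injective (lift ((inl (f a) n).comp f) (y (f a) n) h) := by
  have ha' : Function.Injective fun j : ℤ => a ^ j := fun p q hpq =>
    ha (by simpa using congrArg f hpq)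
  let fs : ∀ b, Factor A b →* Factor A' b := fun b => match b with
    | true => f
    | false => MonoidHom.id (Multiplicative ℤ)
  have hcomm : ∀ b k, fs b (diagram a n b k) = diagram (f a) n b k := by
    rintro (_ | _) k
    · rfl
    · exact map_zpow f a _
  have hF : ∀ b g, lift ((inl (f a) n).comp f) (y (f a) n) h
      (Monoid.PushoutI.of (φ := diagram a n) b g) =
        Monoid.PushoutI.of (φ := diagram (f a) n) b (fs b g) := by
    rintro (_ | _) g
    · refine (congrArg _ (of_false a n g)).trans ?_
      rw [map_zpow, lift_y]
      exact (of_false (f a) n g).symm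
    · exact lift_inl _ _ h g
  refine pushoutMap_injective fs (diagram_injective ha' hn) (diagram_injective ha hn) ?_ hcomm _
    hF ?_
  · rintro (_ | _)
    · exact Function.injective_id
    · exact hf
  · intro k
    rw [← Monoid.PushoutI.of_apply_eq_base (diagram a n) true, hF]
    exact (congrArg _ (hcomm true k)).trans (Monoid.PushoutI.of_apply_eq_base _ _ _)

end Amalgam

/-! ### The subgroup generated by `y` and `t` -/

/-- The homomorphism `x ↦ y`, `t ↦ t` from `BS(n, n l)` to `(Perm ℚ × ℤ) *_{x^m = y^n} ⟨y⟩` is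
injective, because it factors through `BS(1,l) *_{x = y^n} ⟨y⟩`. The first factor `Φ` is in fact an
isomorphism; a left inverse `Ψ` is enough for its injectivity. -/
theorem BS.injective_of_amalgam (l m n : ℤ) (hl : l ≠ 0) (hm : m ≠ 0) (hn : n ≠ 0)
    (f : BS n (n * l) →* Amalgam (BS.toAff l m hl (BS.x 1 l)) n)
    (hx : f (BS.x n (n * l)) = Amalgam.y _ n)
    (ht : f (BS.t n (n * l)) = Amalgam.inl _ n (Aff.t l hl)) : Function.Injective f := by
  have hrel : (Amalgam.inl (BS.x 1 l) n (BS.t 1 l))⁻¹ * Amalgam.y (BS.x 1 l) n ^ n *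
      Amalgam.inl (BS.x 1 l) n (BS.t 1 l) = Amalgam.y (BS.x 1 l) n ^ (n * l) := by
    rw [zpow_mul, Amalgam.y_zpow, ← map_inv, ← map_mul, ← map_mul, ← map_zpow]
    congr 1
    simpa using BS.rel 1 l
  let Φ : BS n (n * l) →* Amalgam (BS.x 1 l) n := BS.lift _ _ _ _ hrel
  have hrel' : (BS.t n (n * l))⁻¹ * (BS.x n (n * l) ^ n) ^ (1 : ℤ) * BS.t n (n * l) =
      (BS.x n (n * l) ^ n) ^ l := by
    rw [zpow_one, ← zpow_mul, BS.rel]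
  let Ψ : Amalgam (BS.x 1 l) n →* BS n (n * l) :=
    Amalgam.lift (BS.lift 1 l (BS.x n (n * l) ^ n) (BS.t n (n * l)) hrel') (BS.x n (n * l))
      (BS.lift_x _ _ _ _ _).symm
  have hΨΦ : Ψ.comp Φ = MonoidHom.id _ := by
    apply BS.hom_ext
    · simp [Ψ, Φ, BS.lift_x, Amalgam.lift_y]
    · simp [Ψ, Φ, BS.lift_t, Amalgam.lift_inl]
  have hΦ : Function.Injective Φ :=
    Function.LeftInverse.injective (g := Ψ) fun g => DFunLike.congr_fun hΨΦ g
  have hX : BS.toAff l m hl (BS.x 1 l) = Aff.x ^ m := BS.lift_x _ _ _ _ _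
  have hΘ := Amalgam.lift_injective (a := BS.x 1 l) (n := n) (BS.toAff l m hl)
    (BS.toAff_injective l m hl hm) (by
      intro p q hpq
      simp only [hX, ← zpow_mul] at hpq
      exact mul_left_cancel₀ hm (Aff.x_zpow_injective hpq)) hn (Amalgam.y_zpow _ _)
  set Θ := Amalgam.lift ((Amalgam.inl (BS.toAff l m hl (BS.x 1 l)) n).comp (BS.toAff l m hl))
    (Amalgam.y (BS.toAff l m hl (BS.x 1 l)) n) (Amalgam.y_zpow _ _) with hΘdef
  have hf : f = Θ.comp Φ := by
    apply BS.hom_ext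
    · simp [hx, Θ, Φ, BS.lift_x, Amalgam.lift_y]
    · rw [ht, MonoidHom.comp_apply, BS.lift_t, hΘdef, Amalgam.lift_inl, MonoidHom.comp_apply]
      exact congrArg _ (BS.lift_t _ _ _ _ _).symm
  rw [hf]
  exact hΘ.comp hΦ

/-- In `H = ⟨x, y, t ∣ t⁻¹ x t = x^l, x^m = y^n⟩`, the subgroup generated by `y` and `t`
is isomorphic to `BS(n, n·l)` via an isomorphism sending the generators to `y` and `t`. -/
theorem subgroup_of_loopEdge_is_bs (l m n : ℤ) (hl : l ≠ 0) (hm : m ≠ 0) (hn : n ≠ 0) :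
    ∃ f : BS n (n * l) →* PresentedGroup (loopEdgeRels l m n),
      Function.Injective f ∧
      f (BS.x n (n * l)) = PresentedGroup.of 1 ∧
      f (BS.t n (n * l)) = PresentedGroup.of 2 ∧
      f.range = Subgroup.closure
        {PresentedGroup.of (rels := loopEdgeRels l m n) 1,
         PresentedGroup.of (rels := loopEdgeRels l m n) 2} := by
  have r1 : (PresentedGroup.of (rels := loopEdgeRels l m n) 2)⁻¹ * PresentedGroup.of 0 *
      PresentedGroup.of 2 = PresentedGroup.of 0 ^ l := by
    have h : PresentedGroup.mk (loopEdgeRels l m n) ((FreeGroup.of 2)⁻¹ * FreeGroup.of 0 *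
        FreeGroup.of 2 * (FreeGroup.of 0) ^ (-l)) = 1 :=
      PresentedGroup.one_of_mem (Or.inl rfl)
    simp only [map_mul, map_inv, map_zpow, zpow_neg] at h
    exact mul_inv_eq_one.1 h
  have r2 : PresentedGroup.of (rels := loopEdgeRels l m n) 0 ^ m = PresentedGroup.of 1 ^ n := by
    have h : PresentedGroup.mk (loopEdgeRels l m n)
        ((FreeGroup.of 0) ^ m * (FreeGroup.of 1) ^ (-n)) = 1 :=
      PresentedGroup.one_of_mem (Or.inr rfl)
    simp only [map_mul, map_zpow, zpow_neg] at h
    exact mul_inv_eq_one.1 h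
  have hrel : (PresentedGroup.of (rels := loopEdgeRels l m n) 2)⁻¹ * PresentedGroup.of 1 ^ n *
      PresentedGroup.of 2 = PresentedGroup.of 1 ^ (n * l) := by
    have h := conj_zpow (i := m) (a := (PresentedGroup.of (rels := loopEdgeRels l m n) 2)⁻¹)
      (b := PresentedGroup.of 0)
    rw [inv_inv, r1] at h
    rw [zpow_mul, ← r2, ← h, ← zpow_mul, ← zpow_mul, mul_comm]
  refine ⟨BS.lift _ _ _ _ hrel, ?_, BS.lift_x _ _ _ _ _, BS.lift_t _ _ _ _ _, ?_⟩
  · have hX : BS.toAff l m hl (BS.x 1 l) = Aff.x ^ m := BS.lift_x _ _ _ _ _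
    let a := BS.toAff l m hl (BS.x 1 l)
    let T : PresentedGroup (loopEdgeRels l m n) →* Amalgam a n :=
      PresentedGroup.toGroup
        (f := ![Amalgam.inl a n Aff.x, Amalgam.y a n, Amalgam.inl a n (Aff.t l hl)]) (by
          rintro r (rfl | rfl)
          · have h := Aff.rel l hl 1
            rw [zpow_one, one_mul] at h
            have h := congrArg (Amalgam.inl a n) h
            simp only [map_mul, map_inv, map_zpow] at h
            simp [h]
          · simp [Amalgam.y_zpow, a, hX])
    refine Function.Injective.of_comp (f := T) ?_
    refine BS.injective_of_amalgam l m n hl hm hn (T.comp (BS.lift _ _ _ _ hrel)) ?_ ?_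
    · rw [MonoidHom.comp_apply, BS.lift_x]
      exact PresentedGroup.toGroup.of _
    · rw [MonoidHom.comp_apply, BS.lift_t]
      exact PresentedGroup.toGroup.of _
  · have htop : Subgroup.closure {BS.x n (n * l), BS.t n (n * l)} = ⊤ := by
      refine top_le_iff.1 ((PresentedGroup.closure_range_of (bsRels n (n * l))).ge.trans
        (Subgroup.closure_mono ?_))
      rintro _ ⟨_ | _, rfl⟩
      · exact Or.inr rfl
      · exact Or.inl rfl
    rw [MonoidHom.range_eq_map, ← htop, MonoidHom.map_closure, Set.image_pair, BS.lift_x,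
      BS.lift_t]
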